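/- arXiv:1505.06812 — 12 statements merged into one kernel-verified Lean document; each statement's English description precedes it below -/
import Mathlib

section
/- Let Ψ : ℝ → ℝ → ℝ be coordinatewise monotone (u ≤ u' and v ≤ v' imply Ψ(u,v) ≤ Ψ(u',v')) and L-stable for some L ≥ 0, i.e. Ψ(u+ε, v+ε) ≤ Ψ(u,v) + L·ε for all u, v ∈ ℝ and all ε ≥ 0. Then for every pair (α, β) ∈ ℝ² with √(α² + β²) > L, the set {α·u + β·v − Ψ(u,v) : u, v ∈ ℝ} is not bounded below; equivalently the concave Fenchel conjugate Ψ*(α,β) = inf_{u,v ∈ ℝ} (α·u + β·v − Ψ(u,v)) equals −∞, so no dual vector of Euclidean norm greater than L can belong to the sufficient dual region of Ψ. -/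
/-!
If `f - Ψ` is bounded below and `Ψ` grows at rate at least `c` along a ray, then `f` has slope at
least `c` in the direction of that ray. Monotonicity supplies the rate `0` along each coordinate
axis, hence `0 ≤ αᵢ`; stability, read backwards, supplies the rate `-L` along `-(1, …, 1)`, hence
`∑ᵢ αᵢ ≤ L`. So the `ℓ¹` norm of `α`, and with it the Euclidean norm, is at most `L`.
-/

open Filter Set

section ConcaveConjugate

variable {𝕜 E : Type*} [Field 𝕜] [LinearOrder 𝕜] [AddCommGroup E] [Module 𝕜 E]

/-- The domain of the concave Fenchel conjugate `f ↦ ⨅ x, (f x - Ψ x)`: the dual vectors at which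
this infimum is not `-∞`, stated as boundedness below so that no junk value of `⨅` intervenes. -/
def concaveConjugateDomain (Ψ : E → 𝕜) : Set (Module.Dual 𝕜 E) :=
  {f | BddBelow (range fun x => f x - Ψ x)}

variable [IsStrictOrderedRing 𝕜] {Ψ : E → 𝕜} {f : Module.Dual 𝕜 E}

theorem le_apply_of_mem_concaveConjugateDomain (hf : f ∈ concaveConjugateDomain Ψ)
    {x d : E} {c : 𝕜} (hgrowth : ∀ t : 𝕜, 0 ≤ t → Ψ x + c * t ≤ Ψ (x + t • d)) :
    c ≤ f d := by
  obtain ⟨m, hm⟩ := hf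
  by_contra! hslope
  have hdiverges : Tendsto (fun t : 𝕜 => (f d - c) * t) atTop atBot :=
    tendsto_id.const_mul_atTop_of_neg (sub_neg.mpr hslope)
  obtain ⟨t, hlt, ht⟩ := ((hdiverges.eventually_lt_atBot (m - (f x - Ψ x))).and
    (eventually_ge_atTop 0)).exists
  have hlower : m ≤ f (x + t • d) - Ψ (x + t • d) := hm ⟨_, rfl⟩
  rw [map_add, map_smul, smul_eq_mul] at hlower
  linarith [hgrowth t ht]

theorem apply_nonneg_of_mem_concaveConjugateDomain [Preorder E] [AddLeftMono E] [PosSMulMono 𝕜 E]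
    (hf : f ∈ concaveConjugateDomain Ψ) (hmono : Monotone Ψ) {d : E} (hd : 0 ≤ d) :
    0 ≤ f d :=
  le_apply_of_mem_concaveConjugateDomain (x := 0) hf fun t ht => by
    simpa only [zero_mul, add_zero] using hmono (le_add_of_nonneg_right (smul_nonneg ht hd))

theorem apply_le_of_mem_concaveConjugateDomain (hf : f ∈ concaveConjugateDomain Ψ)
    {e : E} {L : 𝕜} (hstable : ∀ x (ε : 𝕜), 0 ≤ ε → Ψ (x + ε • e) ≤ Ψ x + L * ε) :
    f e ≤ L := by
  have hbackward : -L ≤ f (-e) :=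
    le_apply_of_mem_concaveConjugateDomain (x := 0) hf fun t ht => by
      have hstep := hstable (0 + t • -e) t ht
      rw [add_assoc, ← smul_add, neg_add_cancel, smul_zero, add_zero] at hstep
      linarith
  rwa [map_neg, neg_le_neg_iff] at hbackward

end ConcaveConjugate

theorem stmt_0_general {𝕜 ι : Type*} [Field 𝕜] [LinearOrder 𝕜] [IsStrictOrderedRing 𝕜] [Fintype ι]
    {Ψ : (ι → 𝕜) → 𝕜} {L : 𝕜} (hmono : Monotone Ψ)
    (hstable : ∀ u (ε : 𝕜), 0 ≤ ε → Ψ (u + ε • 1) ≤ Ψ u + L * ε)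
    {α : ι → 𝕜} (hα : L < ∑ i, |α i|) :
    ¬ BddBelow (range fun u => α ⬝ᵥ u - Ψ u) := by
  classical
  intro hbdd
  have hmem : dotProductBilin 𝕜 𝕜 α ∈ concaveConjugateDomain Ψ := hbdd
  have hnonneg (i : ι) : 0 ≤ α i := by
    simpa using apply_nonneg_of_mem_concaveConjugateDomain hmem hmono
      (Pi.single_nonneg.mpr (zero_le_one' 𝕜) : 0 ≤ Pi.single i 1)
  have hsum : ∑ i, α i ≤ L := by
    simpa [dotProduct_one] using apply_le_of_mem_concaveConjugateDomain hmem hstable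
  simp only [abs_of_nonneg (hnonneg _)] at hα
  exact hα.not_ge hsum

theorem sqrt_sq_add_sq_le_abs_add_abs (a b : ℝ) : √(a ^ 2 + b ^ 2) ≤ |a| + |b| := by
  simpa only [Complex.norm_eq_sqrt_sq_add_sq] using Complex.norm_le_abs_re_add_abs_im ⟨a, b⟩

/-- If `Ψ : ℝ → ℝ → ℝ` is coordinatewise monotone and `L`-stable
(`Ψ (u+ε) (v+ε) ≤ Ψ u v + L * ε` for all `ε ≥ 0`), then for any dual vector
`(α, β)` with Euclidean norm `√(α² + β²) > L`, the set
`{α·u + β·v − Ψ u v : u, v ∈ ℝ}` is not bounded below, i.e. the concave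
Fenchel conjugate `Ψ*(α, β) = −∞`. -/
theorem stmt_0 (Ψ : ℝ → ℝ → ℝ) (L : ℝ) (hL : 0 ≤ L)
    (hmono : ∀ u u' v v' : ℝ, u ≤ u' → v ≤ v' → Ψ u v ≤ Ψ u' v')
    (hstable : ∀ u v ε : ℝ, 0 ≤ ε → Ψ (u + ε) (v + ε) ≤ Ψ u v + L * ε)
    (α β : ℝ) (hαβ : Real.sqrt (α ^ 2 + β ^ 2) > L) :
    ¬ BddBelow {x : ℝ | ∃ u v : ℝ, x = α * u + β * v - Ψ u v} := by
  intro hbdd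
  exact stmt_0_general (Ψ := fun w : Fin 2 → ℝ => Ψ (w 0) (w 1)) (α := ![α, β])
    (fun _ _ hw => hmono _ _ _ _ (hw 0) (hw 1))
    (fun w ε hε => by simpa using hstable (w 0) (w 1) ε hε)
    (by simpa using hαβ.trans_le (sqrt_sq_add_sq_le_abs_add_abs α β))
    (hbdd.mono <| by rintro _ ⟨w, rfl⟩; exact ⟨w 0, w 1, by simp [dotProduct]⟩)
end

section
/- In the general pseudo-linear setting, fix v ∈ ℝ with v ≤ F*, and assume the set {V(w,v) : w ∈ W} is bounded above with e := sup_{w ∈ W} V(w,v) − v. Then e / (1 + f) ≥ F* − v, i.e. sup_{w ∈ W} V(w,v) − v ≥ (1 + f)·(F* − v). -/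
/-!
Writing `D = 1 + γ P + δ N`, the identity `V(w, v) - v = (F w - v) * D w` shows that
`e = sup_w V(w, v) - v` bounds every `(F w - v) * D w`. Hence `F w - v ≤ e / D w`, and since
`d ↦ e / d` is monotone on positive reals (in the direction given by the sign of `e`), its values on
`[1 + f, 1 + g]` are at most the larger of the two endpoint values; so is `F* - v`.
As `F* - v ≥ 0`, this forces `e ≥ 0`, and then the larger value is `e / (1 + f)`.
-/

open Set

lemma valuation_sub_eq_measure_sub_mul {K : Type*} [Field K] {c a b γ δ p n : K} (v : K)
    (hD : 1 + γ * p + δ * n ≠ 0) :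
    c + (a - v * γ) * p + (b - v * δ) * n - v =
      ((c + a * p + b * n) / (1 + γ * p + δ * n) - v) * (1 + γ * p + δ * n) := by
  rw [sub_mul (_ / _), div_mul_cancel₀ _ hD]
  ring

section OrderedField

variable {K : Type*} [Field K] [LinearOrder K] [IsStrictOrderedRing K]

lemma div_le_max_div_div_of_mem_Icc (e : K) {d m M : K} (hm : 0 < m) (hd : d ∈ Icc m M) :
    e / d ≤ max (e / m) (e / M) := by
  have hd₀ : 0 < d := hm.trans_le hd.1
  rcases le_total 0 e with he | he
  · exact le_max_of_le_left (div_le_div_of_nonneg_left he hm hd.1)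
  · refine le_max_of_le_right ?_
    rw [div_eq_mul_inv, div_eq_mul_inv]
    exact mul_le_mul_of_nonpos_left (inv_anti₀ hd₀ hd.2) he

lemma mul_sub_le_of_isLUB_of_sub_mul_le {ι : Type*} {F D : ι → K} {s v e m M : K}
    (hs : IsLUB (range F) s) (hv : v ≤ s) (hm : 0 < m) (hD : ∀ i, D i ∈ Icc m M)
    (he : ∀ i, (F i - v) * D i ≤ e) : m * (s - v) ≤ e := by
  obtain ⟨_, i, rfl⟩ := hs.nonempty
  have hmM : m ≤ M := (hD i).1.trans (hD i).2
  have hs_max : s - v ≤ max (e / m) (e / M) := by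
    rw [sub_le_iff_le_add, isLUB_le_iff hs]
    rintro _ ⟨j, rfl⟩
    rw [← sub_le_iff_le_add]
    calc
      F j - v ≤ e / D j := (le_div_iff₀ (hm.trans_le (hD j).1)).2 (he j)
      _ ≤ max (e / m) (e / M) := div_le_max_div_div_of_mem_Icc e hm (hD j)
  have he₀ : 0 ≤ e := by
    by_contra! he_neg
    have hs_neg : s - v < 0 := hs_max.trans_lt <|
      max_lt (div_neg_of_neg_of_pos he_neg hm) (div_neg_of_neg_of_pos he_neg (hm.trans_le hmM))
    exact hs_neg.not_ge (sub_nonneg.2 hv)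
  rwa [max_eq_left (div_le_div_of_nonneg_left he₀ hm hmM), le_div_iff₀' hm] at hs_max

end OrderedField

/-- In the general pseudo-linear setting, for `v ≤ F*`,
`sup_w V(w,v) − v ≥ (1 + f)·(F* − v)`. -/
theorem stmt_3 {W : Type*} [Nonempty W] (P N : W → ℝ) (c a b γ δ f g : ℝ)
    (hf : -1 < f) (hfg : f ≤ g)
    (hlow : ∀ w : W, f ≤ γ * P w + δ * N w)
    (hhigh : ∀ w : W, γ * P w + δ * N w ≤ g)
    (F : W → ℝ)
    (hF : ∀ w, F w = (c + a * P w + b * N w) / (1 + γ * P w + δ * N w))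
    (V : W → ℝ → ℝ)
    (hV : ∀ w v, V w v = c + (a - v * γ) * P w + (b - v * δ) * N w)
    (hFb : BddAbove (Set.range F))
    (v : ℝ) (hv : v ≤ sSup (Set.range F))
    (hVb : BddAbove (Set.range fun w => V w v)) :
    sSup (Set.range fun w => V w v) - v ≥ (1 + f) * (sSup (Set.range F) - v) := by
  have hm : 0 < 1 + f := by linarith
  have hD (w : W) : 1 + γ * P w + δ * N w ∈ Icc (1 + f) (1 + g) :=
    ⟨by linarith [hlow w], by linarith [hhigh w]⟩
  refine mul_sub_le_of_isLUB_of_sub_mul_le (isLUB_csSup (range_nonempty F) hFb) hv hm hD fun w ↦ ?_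
  calc
    (F w - v) * (1 + γ * P w + δ * N w) = V w v - v := by
      rw [hF, hV, valuation_sub_eq_measure_sub_mul v (hm.trans_le (hD w).1).ne']
    _ ≤ sSup (range fun w => V w v) - v := sub_le_sub_right (le_csSup hVb (mem_range_self w)) v
end

section
/- (Convergence of the exact Alternate-Maximization procedure.) In the general pseudo-linear setting, let (wₜ)ₜ∈ℕ be a sequence in W such that for every t, setting vₜ = F(wₜ), the classifier w_{t+1} exactly maximizes the valuation at level vₜ: V(w_{t+1}, vₜ) = sup_{w ∈ W} V(w, vₜ) (in particular the supremum is attained at w_{t+1}). Let Δₜ = F* − F(wₜ) and η = (g − f)/(g + 1). Then 0 ≤ η < 1 and for all t ∈ ℕ, Δₜ ≤ Δ₀ · ηᵗ; in particular Δ_{t+1} ≤ η·Δₜ for every t. -/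
/-!
Maximizing the valuation at level `F x` amounts to maximizing `(F z - F x) * D z` over `z`. As `D`
lies between `m` and `M`, the gain `F y - F x` of the maximizer `y` is at least `m / M` times the
gain `F z - F x` of any competitor `z`, so the gap to `z`, and hence to the supremum, shrinks by the
factor `1 - m / M`.
-/

open Set

/-- `y` is an exact alternate-maximization (Dinkelbach) step from `x` for the objective `F` with
denominator `D`. The valuation at level `F x` is recorded up to the additive constant `F x`, as
`(F z - F x) * D z`, so that the numerator `F z * D z` need not be named. -/
def IsDinkelbachStep {R W : Type*} [Ring R] [LE R] (F D : W → R) (x y : W) : Prop :=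
  ∀ z, (F z - F x) * D z ≤ (F y - F x) * D y

namespace IsDinkelbachStep

section Ring

variable {R W : Type*} [Ring R] [LinearOrder R] [IsStrictOrderedRing R]
  {F D : W → R} {x y z : W} {m M : R}

theorem le (h : IsDinkelbachStep F D x y) (hy : 0 < D y) : F x ≤ F y := by
  have hgain : 0 ≤ (F y - F x) * D y := by simpa only [sub_self, zero_mul] using h x
  exact sub_nonneg.mp (nonneg_of_mul_nonneg_left hgain hy)

theorem sub_mul_le_sub_mul (h : IsDinkelbachStep F D x y) (hm : 0 < m) (hmy : m ≤ D y)
    (hyM : D y ≤ M) (hmz : m ≤ D z) : (F z - F x) * m ≤ (F y - F x) * M := by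
  have hgain : 0 ≤ F y - F x := sub_nonneg.mpr (h.le (hm.trans_le hmy))
  obtain hz | hz := le_total (F z - F x) 0
  · calc (F z - F x) * m ≤ 0 := mul_nonpos_of_nonpos_of_nonneg hz hm.le
      _ ≤ (F y - F x) * M := mul_nonneg hgain (hm.le.trans (hmy.trans hyM))
  · calc (F z - F x) * m ≤ (F z - F x) * D z := mul_le_mul_of_nonneg_left hmz hz
      _ ≤ (F y - F x) * D y := h z
      _ ≤ (F y - F x) * M := mul_le_mul_of_nonneg_left hyM hgain

end Ring

section Field

variable {K W : Type*} [Field K] [LinearOrder K] [IsStrictOrderedRing K]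
  {F D : W → K} {x y z : W} {m M S : K}

theorem sub_le_mul_sub (h : IsDinkelbachStep F D x y) (hm : 0 < m) (hmy : m ≤ D y)
    (hyM : D y ≤ M) (hmz : m ≤ D z) : F z - F y ≤ (1 - m / M) * (F z - F x) := by
  have hM : 0 < M := hm.trans_le (hmy.trans hyM)
  have hgain : (F z - F x) * m / M ≤ F y - F x :=
    (div_le_iff₀ hM).mpr (h.sub_mul_le_sub_mul hm hmy hyM hmz)
  calc F z - F y = (F z - F x) - (F y - F x) := by ring
    _ ≤ (F z - F x) - (F z - F x) * m / M := sub_le_sub_left hgain _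
    _ = (1 - m / M) * (F z - F x) := by ring

theorem isLUB_sub_le_mul_sub (h : IsDinkelbachStep F D x y) (hS : IsLUB (range F) S) (hm : 0 < m)
    (hmD : ∀ z, m ≤ D z) (hyM : D y ≤ M) : S - F y ≤ (1 - m / M) * (S - F x) := by
  have hmM : m ≤ M := (hmD y).trans hyM
  have hrate : 0 ≤ 1 - m / M := sub_nonneg.mpr (div_le_one_of_le₀ hmM (hm.le.trans hmM))
  rw [sub_le_iff_le_add]
  refine hS.2 (forall_mem_range.mpr fun z => sub_le_iff_le_add.mp ?_)
  calc F z - F y ≤ (1 - m / M) * (F z - F x) := h.sub_le_mul_sub hm (hmD y) hyM (hmD z)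
    _ ≤ (1 - m / M) * (S - F x) :=
      mul_le_mul_of_nonneg_left (sub_le_sub_right (hS.1 (mem_range_self z)) _) hrate

end Field

end IsDinkelbachStep

theorem valuation_sub_level_eq {K : Type*} [Field K] {c a b γ δ p n : K}
    (hD : 1 + γ * p + δ * n ≠ 0) (v : K) :
    c + (a - v * γ) * p + (b - v * δ) * n - v =
      ((c + a * p + b * n) / (1 + γ * p + δ * n) - v) * (1 + γ * p + δ * n) := by
  rw [sub_mul (_ / _), div_mul_cancel₀ _ hD]
  ring

theorem le_mul_pow_of_succ_le_mul {R : Type*} [CommSemiring R] [PartialOrder R] [IsOrderedRing R]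
    {u : ℕ → R} {η : R} (hη : 0 ≤ η) (hu : ∀ t, u (t + 1) ≤ η * u t) (t : ℕ) :
    u t ≤ u 0 * η ^ t := by
  induction t with
  | zero => simp
  | succ t ih =>
    calc u (t + 1) ≤ η * u t := hu t
      _ ≤ η * (u 0 * η ^ t) := mul_le_mul_of_nonneg_left ih hη
      _ = u 0 * η ^ (t + 1) := by ring

theorem stmt_5_general {K W : Type*} [Field K] [LinearOrder K] [IsStrictOrderedRing K]
    {P N F : W → K} {V : W → K → K} {c a b γ δ f g S : K} (hf : -1 < f)
    (hlow : ∀ x, f ≤ γ * P x + δ * N x) (hhigh : ∀ x, γ * P x + δ * N x ≤ g)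
    (hF : ∀ x, F x = (c + a * P x + b * N x) / (1 + γ * P x + δ * N x))
    (hV : ∀ x v, V x v = c + (a - v * γ) * P x + (b - v * δ) * N x)
    (hS : IsLUB (range F) S) {w : ℕ → W}
    (hmax : ∀ t x, V x (F (w t)) ≤ V (w (t + 1)) (F (w t))) :
    (0 ≤ (g - f) / (g + 1) ∧ (g - f) / (g + 1) < 1) ∧
    (∀ t, S - F (w t) ≤ (S - F (w 0)) * ((g - f) / (g + 1)) ^ t) ∧
    (∀ t, S - F (w (t + 1)) ≤ (g - f) / (g + 1) * (S - F (w t))) := by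
  have hfg : f ≤ g := (hlow (w 0)).trans (hhigh (w 0))
  have hm : 0 < 1 + f := by linarith
  have hM : 0 < g + 1 := by linarith
  have hη : 0 ≤ (g - f) / (g + 1) := div_nonneg (sub_nonneg.mpr hfg) hM.le
  have hη_eq : (g - f) / (g + 1) = 1 - (1 + f) / (g + 1) := by field_simp; ring
  let D : W → K := fun x => 1 + γ * P x + δ * N x
  have hmD : ∀ x, 1 + f ≤ D x := fun x => by linarith only [hlow x]
  have hDM : ∀ x, D x ≤ g + 1 := fun x => by linarith only [hhigh x]
  have hval : ∀ x v, V x v - v = (F x - v) * D x := fun x v => by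
    rw [hV, hF, valuation_sub_level_eq (hm.trans_le (hmD x)).ne']
  have hstep : ∀ t, IsDinkelbachStep F D (w t) (w (t + 1)) := fun t x => by
    simpa only [← hval] using sub_le_sub_right (hmax t x) _
  have hcontract : ∀ t, S - F (w (t + 1)) ≤ (g - f) / (g + 1) * (S - F (w t)) := fun t =>
    hη_eq ▸ (hstep t).isLUB_sub_le_mul_sub hS hm hmD (hDM _)
  exact ⟨⟨hη, (div_lt_one hM).mpr (by linarith)⟩,
    le_mul_pow_of_succ_le_mul (u := fun t => S - F (w t)) hη hcontract, hcontract⟩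

/-- Convergence of the exact Alternate-Maximization procedure: if each `w (t+1)`
exactly maximizes the valuation at level `v t = F (w t)`, then the excess error
`Δ t = F* − F (w t)` satisfies `Δ t ≤ Δ 0 · η ^ t` with
`η = (g − f)/(g + 1) ∈ [0, 1)`, and in particular `Δ (t+1) ≤ η · Δ t`. -/
theorem stmt_5 {W : Type*} [Nonempty W] (P N : W → ℝ) (c a b γ δ f g : ℝ)
    (hf : -1 < f) (hfg : f ≤ g)
    (hlow : ∀ w : W, f ≤ γ * P w + δ * N w)
    (hhigh : ∀ w : W, γ * P w + δ * N w ≤ g)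
    (F : W → ℝ)
    (hF : ∀ w, F w = (c + a * P w + b * N w) / (1 + γ * P w + δ * N w))
    (V : W → ℝ → ℝ)
    (hV : ∀ w v, V w v = c + (a - v * γ) * P w + (b - v * δ) * N w)
    (hFb : BddAbove (Set.range F))
    (w : ℕ → W)
    (hmax : ∀ t : ℕ,
      IsLUB (Set.range fun w' => V w' (F (w t))) (V (w (t + 1)) (F (w t)))) :
    (0 ≤ (g - f) / (g + 1) ∧ (g - f) / (g + 1) < 1) ∧
    (∀ t : ℕ, sSup (Set.range F) - F (w t) ≤
      (sSup (Set.range F) - F (w 0)) * ((g - f) / (g + 1)) ^ t) ∧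
    (∀ t : ℕ, sSup (Set.range F) - F (w (t + 1)) ≤
      (g - f) / (g + 1) * (sSup (Set.range F) - F (w t))) :=
  stmt_5_general hf hlow hhigh hF hV (isLUB_csSup (Set.range_nonempty F) hFb)
    fun t x => (hmax t).1 (Set.mem_range_self x)
end

section
/- (Alt-Max contraction rate for F_β-measure.) Let W be a nonempty set, let β₀ > 0 and θ > 0 be reals, let 0 < m < 1 + β₀²/θ, and let P, N : W → ℝ satisfy 0 ≤ P(w) ≤ m and 0 ≤ N(w) ≤ m for all w. Define F(w) = (1 + β₀²)·P(w) / (β₀² + θ + P(w) − θ·N(w)) (the canonical F_β-measure, whose denominator is positive under these conditions) and the valuation V(w,v) = [(1+β₀²)/(β₀²+θ) − v/(β₀²+θ)]·P(w) + [v·θ/(β₀²+θ)]·N(w). Assume F is bounded above with F* = sup_{w∈W} F(w). If w₀, w₁ ∈ W satisfy v = F(w₀) and V(w₁, v) = sup_{w ∈ W} V(w, v), then F* − F(w₁) ≤ [m·(1+θ)/(m + β₀² + θ)] · (F* − F(w₀)). -/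
/-!
For every level `v`, the valuation satisfies `V(w, v) - v = D(w) / (β² + θ) * (F(w) - v)`, where
`D` is the denominator of `F`. Hence one step of alternate maximization from `w₀` maximizes the
weighted gain `D(w) * (F(w) - F(w₀))`. As `a ≤ D ≤ b` with `a = β² + θ - θ m` and
`b = β² + θ + m`, the maximizer `w₁` satisfies `a * (F(w) - F(w₀)) ≤ b * (F(w₁) - F(w₀))` for all
`w`. Passing to the supremum bounds the error by `1 - a / b` times the previous one.
-/

section WeightedGain

variable {W K : Type*} {s : Set W} {d F : W → K} {w₀ w₁ : W}

theorem le_of_isMaxOn_mul_sub [Ring K] [LinearOrder K] [IsStrictOrderedRing K]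
    (hw₀ : w₀ ∈ s) (hd : 0 < d w₁) (hmax : IsMaxOn (fun w => d w * (F w - F w₀)) s w₁) :
    F w₀ ≤ F w₁ := by
  have hgain : 0 ≤ d w₁ * (F w₁ - F w₀) := by simpa using hmax hw₀
  exact sub_nonneg.1 (nonneg_of_mul_nonneg_right hgain hd)

theorem mul_sub_le_mul_sub_of_isMaxOn [Ring K] [LinearOrder K] [IsStrictOrderedRing K]
    {a b : K} (ha : 0 < a) (had : ∀ w ∈ s, a ≤ d w) (hdb : d w₁ ≤ b)
    (hw₀ : w₀ ∈ s) (hw₁ : w₁ ∈ s) (hmax : IsMaxOn (fun w => d w * (F w - F w₀)) s w₁)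
    {w : W} (hw : w ∈ s) :
    a * (F w - F w₀) ≤ b * (F w₁ - F w₀) := by
  have hd₁ : 0 < d w₁ := ha.trans_le (had w₁ hw₁)
  have hgain : 0 ≤ F w₁ - F w₀ := sub_nonneg.2 (le_of_isMaxOn_mul_sub hw₀ hd₁ hmax)
  rcases le_total (F w) (F w₀) with hle | hge
  · calc a * (F w - F w₀) ≤ 0 := mul_nonpos_of_nonneg_of_nonpos ha.le (sub_nonpos.2 hle)
      _ ≤ b * (F w₁ - F w₀) := mul_nonneg (hd₁.le.trans hdb) hgain
  · calc a * (F w - F w₀) ≤ d w * (F w - F w₀) :=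
          mul_le_mul_of_nonneg_right (had w hw) (sub_nonneg.2 hge)
      _ ≤ d w₁ * (F w₁ - F w₀) := hmax hw
      _ ≤ b * (F w₁ - F w₀) := mul_le_mul_of_nonneg_right hdb hgain

theorem sub_le_one_sub_div_mul_sub_of_isLUB_of_isMaxOn
    [Field K] [LinearOrder K] [IsStrictOrderedRing K]
    {a b M : K} (ha : 0 < a) (had : ∀ w ∈ s, a ≤ d w) (hdb : d w₁ ≤ b)
    (hw₀ : w₀ ∈ s) (hw₁ : w₁ ∈ s) (hmax : IsMaxOn (fun w => d w * (F w - F w₀)) s w₁)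
    (hM : IsLUB (F '' s) M) :
    M - F w₁ ≤ (1 - a / b) * (M - F w₀) := by
  have hb : 0 < b := ha.trans_le ((had w₁ hw₁).trans hdb)
  have hM_le : M ≤ F w₀ + b * (F w₁ - F w₀) / a := by
    refine hM.2 (Set.forall_mem_image.2 fun w hw => ?_)
    rw [← sub_le_iff_le_add', le_div_iff₀' ha]
    exact mul_sub_le_mul_sub_of_isMaxOn ha had hdb hw₀ hw₁ hmax hw
  have hstep : a / b * (M - F w₀) ≤ F w₁ - F w₀ := by
    rwa [div_mul_eq_mul_div, div_le_iff₀' hb, ← le_div_iff₀' ha, sub_le_iff_le_add']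
  linarith

end WeightedGain

section FBeta

variable {K : Type*}

/-- The denominator of the canonical F_β-measure with label skew `θ`, at true positive reward
rate `p` and true negative reward rate `n`. -/
def fBetaDenom [CommRing K] (β θ p n : K) : K :=
  β ^ 2 + θ + p - θ * n

/-- The canonical F_β-measure with label skew `θ`, as a function of the true positive and true
negative reward rates `p` and `n`. -/
def fBeta [Field K] (β θ p n : K) : K :=
  (1 + β ^ 2) * p / fBetaDenom β θ p n

/-- The valuation of the F_β-measure at level `v`, which alternate maximization optimizes in the
reward rates `p` and `n`. It is normalized by the constant term `β ^ 2 + θ` of `fBetaDenom`. -/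
def fBetaValuation [Field K] (β θ p n v : K) : K :=
  ((1 + β ^ 2) / (β ^ 2 + θ) - v / (β ^ 2 + θ)) * p + v * θ / (β ^ 2 + θ) * n

theorem fBetaDenom_le_fBetaDenom [CommRing K] [LinearOrder K] [IsStrictOrderedRing K]
    {θ p n p' n' : K} (β : K) (hθ : 0 ≤ θ) (hp : p ≤ p') (hn : n' ≤ n) :
    fBetaDenom β θ p n ≤ fBetaDenom β θ p' n' := by
  unfold fBetaDenom
  gcongr

theorem fBetaDenom_zero_pos [Field K] [LinearOrder K] [IsStrictOrderedRing K]
    {β θ m : K} (hθ : 0 < θ) (hm : m < 1 + β ^ 2 / θ) :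
    0 < fBetaDenom β θ 0 m := by
  have hθm : θ * m < θ * (1 + β ^ 2 / θ) := mul_lt_mul_of_pos_left hm hθ
  rw [mul_add, mul_one, mul_div_cancel₀ _ hθ.ne'] at hθm
  unfold fBetaDenom
  linarith

theorem one_sub_fBetaDenom_div_fBetaDenom [Field K] {β θ m : K}
    (hden : m + β ^ 2 + θ ≠ 0) :
    1 - fBetaDenom β θ 0 m / fBetaDenom β θ m 0 = m * (1 + θ) / (m + β ^ 2 + θ) := by
  have hden_eq : fBetaDenom β θ m 0 = m + β ^ 2 + θ := by unfold fBetaDenom; ring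
  rw [hden_eq, one_sub_div hden, fBetaDenom]
  ring

theorem fBetaValuation_eq_add_fBetaDenom_mul_sub [Field K] {β θ p n : K}
    (hc : β ^ 2 + θ ≠ 0) (hD : fBetaDenom β θ p n ≠ 0) (v : K) :
    fBetaValuation β θ p n v =
      v + fBetaDenom β θ p n * (fBeta β θ p n - v) / (β ^ 2 + θ) := by
  have hnum : fBetaDenom β θ p n * fBeta β θ p n = (1 + β ^ 2) * p := mul_div_cancel₀ _ hD
  rw [mul_sub, hnum, fBetaValuation, fBetaDenom]
  field

variable [Field K] [LinearOrder K] [IsStrictOrderedRing K] {β θ p n p' n' v : K}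

theorem fBetaValuation_le_fBetaValuation_iff (hc : 0 < β ^ 2 + θ)
    (hD : fBetaDenom β θ p n ≠ 0) (hD' : fBetaDenom β θ p' n' ≠ 0) :
    fBetaValuation β θ p n v ≤ fBetaValuation β θ p' n' v ↔
      fBetaDenom β θ p n * (fBeta β θ p n - v) ≤
        fBetaDenom β θ p' n' * (fBeta β θ p' n' - v) := by
  rw [fBetaValuation_eq_add_fBetaDenom_mul_sub hc.ne' hD,
    fBetaValuation_eq_add_fBetaDenom_mul_sub hc.ne' hD', add_le_add_iff_left,
    div_le_div_iff_of_pos_right hc]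

end FBeta

/-- Alt-Max contraction rate for the F_β-measure: one exact alternate-maximization
step contracts the excess error by a factor `m(1+θ)/(m + β₀² + θ)`. -/
theorem stmt_6 {W : Type*} [Nonempty W] (β₀ θ m : ℝ)
    (hβ₀ : 0 < β₀) (hθ : 0 < θ) (hm : 0 < m) (hm' : m < 1 + β₀ ^ 2 / θ)
    (P N : W → ℝ)
    (hP : ∀ w, 0 ≤ P w ∧ P w ≤ m) (hN : ∀ w, 0 ≤ N w ∧ N w ≤ m)
    (F : W → ℝ)
    (hF : ∀ w, F w = (1 + β₀ ^ 2) * P w / (β₀ ^ 2 + θ + P w - θ * N w))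
    (V : W → ℝ → ℝ)
    (hV : ∀ w v, V w v = ((1 + β₀ ^ 2) / (β₀ ^ 2 + θ) - v / (β₀ ^ 2 + θ)) * P w
      + v * θ / (β₀ ^ 2 + θ) * N w)
    (hFb : BddAbove (Set.range F))
    (w₀ w₁ : W) (v : ℝ) (hv : v = F w₀)
    (hVb : BddAbove (Set.range fun w => V w v))
    (hmax : V w₁ v = sSup (Set.range fun w => V w v)) :
    sSup (Set.range F) - F w₁ ≤
      m * (1 + θ) / (m + β₀ ^ 2 + θ) * (sSup (Set.range F) - F w₀) := by
  obtain rfl : F = fun w => fBeta β₀ θ (P w) (N w) := funext hF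
  obtain rfl : V = fun w v => fBetaValuation β₀ θ (P w) (N w) v := funext₂ hV
  subst hv
  have hc : 0 < β₀ ^ 2 + θ := by positivity
  have hden_pos : 0 < fBetaDenom β₀ θ 0 m := fBetaDenom_zero_pos hθ hm'
  have hden_ge (w : W) : fBetaDenom β₀ θ 0 m ≤ fBetaDenom β₀ θ (P w) (N w) :=
    fBetaDenom_le_fBetaDenom β₀ hθ.le (hP w).1 (hN w).2
  have hden_ne (w : W) : fBetaDenom β₀ θ (P w) (N w) ≠ 0 := (hden_pos.trans_le (hden_ge w)).ne'
  have hden_le : fBetaDenom β₀ θ (P w₁) (N w₁) ≤ fBetaDenom β₀ θ m 0 :=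
    fBetaDenom_le_fBetaDenom β₀ hθ.le (hP w₁).2 (hN w₁).1
  have hgain : IsMaxOn (fun w => fBetaDenom β₀ θ (P w) (N w) *
      (fBeta β₀ θ (P w) (N w) - fBeta β₀ θ (P w₀) (N w₀))) Set.univ w₁ := fun w _ =>
    (fBetaValuation_le_fBetaValuation_iff hc (hden_ne w) (hden_ne w₁)).1
      ((le_csSup hVb (Set.mem_range_self w)).trans_eq hmax.symm)
  rw [← one_sub_fBetaDenom_div_fBetaDenom (by positivity)]
  refine sub_le_one_sub_div_mul_sub_of_isLUB_of_isMaxOn hden_pos (fun w _ => hden_ge w) hden_le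
    (Set.mem_univ w₀) (Set.mem_univ w₁) hgain ?_
  simpa only [Set.image_univ] using isLUB_csSup (Set.range_nonempty _) hFb
end

section
/- In the F1 setting, for every v ∈ ℝ: e(v) < 0 if and only if F* < v. That is, the best achievable excess valuation at level v is negative exactly when v is an illegitimate (unachievable) level exceeding the optimal F1 value. -/
/-!
The excess `V w v - v` is `F w - v` times the weight `1 + (P w - N w) / 2`. Agreement of the signs
at each `w` would only give weak inequalities between suprema; since the weights stay between two
positive constants, a negative gap that is uniform in `w` for one family is uniform for the other.
-/

section WeightedExcess

variable {ι : Type*} [Nonempty ι] {f g c : ι → ℝ} {v ε C : ℝ}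

theorem ciSup_lt_of_sub_eq_sub_mul (hε : 0 < ε) (hc : ∀ i, ε ≤ c i)
    (hfg : ∀ i, f i - v = (g i - v) * c i) (hg : BddAbove (Set.range g)) (hlt : ⨆ i, g i < v) :
    ⨆ i, f i < v := by
  have hgap : (⨆ i, g i) - v < 0 := sub_neg.mpr hlt
  have uniform_gap (i : ι) : f i - v ≤ ((⨆ j, g j) - v) * ε :=
    calc f i - v = (g i - v) * c i := hfg i
      _ ≤ ((⨆ j, g j) - v) * c i :=
        mul_le_mul_of_nonneg_right (sub_le_sub_right (le_ciSup hg i) v) (hε.le.trans (hc i))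
      _ ≤ ((⨆ j, g j) - v) * ε := mul_le_mul_of_nonpos_left (hc i) hgap.le
  calc ⨆ i, f i ≤ ((⨆ j, g j) - v) * ε + v := ciSup_le fun i ↦ sub_le_iff_le_add.mp (uniform_gap i)
    _ < v := add_lt_of_neg_left v (mul_neg_of_neg_of_pos hgap hε)

theorem ciSup_lt_iff_of_sub_eq_sub_mul (hε : 0 < ε) (hεc : ∀ i, ε ≤ c i) (hcC : ∀ i, c i ≤ C)
    (hfg : ∀ i, f i - v = (g i - v) * c i)
    (hf : BddAbove (Set.range f)) (hg : BddAbove (Set.range g)) :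
    ⨆ i, f i < v ↔ ⨆ i, g i < v := by
  have hc (i : ι) : 0 < c i := hε.trans_le (hεc i)
  have hC : 0 < C := (hc (Classical.arbitrary ι)).trans_le (hcC _)
  have hgf (i : ι) : g i - v = (f i - v) * (c i)⁻¹ :=
    (eq_mul_inv_iff_mul_eq₀ (hc i).ne').mpr (hfg i).symm
  exact ⟨ciSup_lt_of_sub_eq_sub_mul (inv_pos.mpr hC) (fun i ↦ inv_anti₀ (hc i) (hcC i)) hgf hf,
    ciSup_lt_of_sub_eq_sub_mul hε hεc hfg hg⟩

end WeightedExcess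

theorem f1_valuation_sub_eq {K : Type*} [Field K] [NeZero (2 : K)] {p n : K}
    (hpn : 2 + p - n ≠ 0) (v : K) :
    (1 - v / 2) * p + v / 2 * n - v = (2 * p / (2 + p - n) - v) * (1 + (p - n) / 2) := by
  have h2 : (2 : K) ≠ 0 := two_ne_zero
  field_simp
  ring

theorem stmt_8_general {W : Type*} [Nonempty W] {m M : ℝ} (hm : m < 2) {P N : W → ℝ}
    (hNP : ∀ w, N w - P w ≤ m) (hPN : ∀ w, P w - N w ≤ M)
    {F : W → ℝ} (hF : ∀ w, F w = 2 * P w / (2 + P w - N w))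
    {V : W → ℝ → ℝ} (hV : ∀ w v, V w v = (1 - v / 2) * P w + v / 2 * N w)
    (hFb : BddAbove (Set.range F))
    {v : ℝ} (hVb : BddAbove (Set.range fun w => V w v)) :
    sSup (Set.range fun w => V w v) - v < 0 ↔ sSup (Set.range F) < v := by
  have excess_eq (w : W) : V w v - v = (F w - v) * (1 + (P w - N w) / 2) := by
    rw [hV, hF]
    exact f1_valuation_sub_eq (by linarith [hNP w]) v
  have le_weight (w : W) : 1 - m / 2 ≤ 1 + (P w - N w) / 2 := by linarith [hNP w]
  have weight_le (w : W) : 1 + (P w - N w) / 2 ≤ 1 + M / 2 := by linarith [hPN w]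
  rw [sub_neg]
  exact ciSup_lt_iff_of_sub_eq_sub_mul (by linarith) le_weight weight_le excess_eq hVb hFb

/-- In the F1 setting, the best achievable excess valuation `e(v)` at level `v`
is negative exactly when `v` exceeds the optimal F1 value `F*`. -/
theorem stmt_8 {W : Type*} [Nonempty W] (m : ℝ) (hm : 0 < m) (hm' : m < 2)
    (P N : W → ℝ)
    (hP : ∀ w, 0 ≤ P w ∧ P w < m) (hN : ∀ w, 0 ≤ N w ∧ N w < m)
    (F : W → ℝ) (hF : ∀ w, F w = 2 * P w / (2 + P w - N w))
    (V : W → ℝ → ℝ) (hV : ∀ w v, V w v = (1 - v / 2) * P w + v / 2 * N w)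
    (hFb : BddAbove (Set.range F))
    (v : ℝ) (hVb : BddAbove (Set.range fun w => V w v)) :
    sSup (Set.range fun w => V w v) - v < 0 ↔ sSup (Set.range F) < v :=
  stmt_8_general (M := m) hm' (fun w ↦ by linarith [(hP w).1, (hN w).2])
    (fun w ↦ by linarith [(hP w).2, (hN w).1]) hF hV hFb hVb
end

section
/- In the F1 setting, for every v ∈ ℝ: (a) if e(v) ≥ 0 then e(v) ≥ ((2 − m)/2)·(F* − v); (b) if e(v) < 0 then e(v) ≥ ((2 + m)/2)·(F* − v). -/
/-!
For every `w` the weight `1 + (P w - N w) / 2` turns `F w - v` into `V w v - v`, which is at most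
`e(v)`. The weight lies between `(2 - m) / 2 > 0` and `(2 + m) / 2`. If `e(v) ≥ 0`, only the `w`
with `F w > v` matter, and the smallest weight gives a valid bound for them; if `e(v) < 0`, every
`F w` lies below `v`, and it is the largest weight that gives one.
-/

section WeightedBound

variable {R : Type*} [Ring R] [LinearOrder R] [IsStrictOrderedRing R] {a b d x e : R}

theorem mul_le_of_le_of_mul_le_of_nonneg (ha : 0 ≤ a) (had : a ≤ d) (he : 0 ≤ e)
    (h : d * x ≤ e) : a * x ≤ e := by
  obtain hx | hx := le_total x 0
  · exact (mul_nonpos_of_nonneg_of_nonpos ha hx).trans he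
  · exact (mul_le_mul_of_nonneg_right had hx).trans h

theorem mul_le_of_le_of_mul_le_of_neg (hd : 0 ≤ d) (hdb : d ≤ b) (he : e < 0)
    (h : d * x ≤ e) : b * x ≤ e := by
  have hx : x < 0 := neg_of_mul_neg_right (h.trans_lt he) hd
  exact (mul_le_mul_of_nonpos_right hdb hx.le).trans h

end WeightedBound

theorem mul_sSup_range_sub_le {ι : Type*} [Nonempty ι] {f : ι → ℝ} {c v e : ℝ} (hc : 0 ≤ c)
    (h : ∀ i, c * (f i - v) ≤ e) : c * (sSup (Set.range f) - v) ≤ e := by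
  rw [mul_sub, sub_le_iff_le_add, sSup_range, Real.mul_iSup_of_nonneg hc]
  exact ciSup_le fun i => by linarith [h i]

theorem f1_valuation_sub_eq_weight_mul {K : Type*} [Field K] [NeZero (2 : K)] {p n : K}
    (hden : 2 + p - n ≠ 0) (v : K) :
    (1 - v / 2) * p + v / 2 * n - v = (1 + (p - n) / 2) * (2 * p / (2 + p - n) - v) := by
  field_simp
  ring

theorem stmt_9_general {W : Type*} [Nonempty W] {m : ℝ} (hm : m < 2) {P N : W → ℝ}
    (hPN : ∀ w, |P w - N w| ≤ m)
    {F : W → ℝ} (hF : ∀ w, F w = 2 * P w / (2 + P w - N w))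
    {V : W → ℝ → ℝ} (hV : ∀ w v, V w v = (1 - v / 2) * P w + v / 2 * N w)
    {v : ℝ} (hVb : BddAbove (Set.range fun w => V w v)) :
    (0 ≤ sSup (Set.range fun w => V w v) - v →
      sSup (Set.range fun w => V w v) - v ≥
        (2 - m) / 2 * (sSup (Set.range F) - v)) ∧
    (sSup (Set.range fun w => V w v) - v < 0 →
      sSup (Set.range fun w => V w v) - v ≥
        (2 + m) / 2 * (sSup (Set.range F) - v)) := by
  have hm0 : 0 ≤ m := (abs_nonneg _).trans (hPN (Classical.arbitrary W))
  have weight_ge (w : W) : (2 - m) / 2 ≤ 1 + (P w - N w) / 2 := by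
    linarith [neg_le_of_abs_le (hPN w)]
  have weight_le (w : W) : 1 + (P w - N w) / 2 ≤ (2 + m) / 2 := by
    linarith [le_of_abs_le (hPN w)]
  have weight_pos (w : W) : 0 < 1 + (P w - N w) / 2 := by linarith [weight_ge w]
  have weight_mul_le (w : W) :
      (1 + (P w - N w) / 2) * (F w - v) ≤ sSup (Set.range fun w => V w v) - v := by
    have hden : 2 + P w - N w ≠ 0 := by linarith [weight_pos w]
    rw [hF, ← f1_valuation_sub_eq_weight_mul hden, ← hV]
    exact sub_le_sub_right (le_csSup hVb ⟨w, rfl⟩) v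
  constructor <;> intro he
  · have hc : 0 ≤ (2 - m) / 2 := by linarith
    exact mul_sSup_range_sub_le hc fun w =>
      mul_le_of_le_of_mul_le_of_nonneg hc (weight_ge w) he (weight_mul_le w)
  · have hc : 0 ≤ (2 + m) / 2 := by linarith
    exact mul_sSup_range_sub_le hc fun w =>
      mul_le_of_le_of_mul_le_of_neg (weight_pos w).le (weight_le w) he (weight_mul_le w)

/-- In the F1 setting: (a) if `e(v) ≥ 0` then `e(v) ≥ ((2 − m)/2)·(F* − v)`;
(b) if `e(v) < 0` then `e(v) ≥ ((2 + m)/2)·(F* − v)`. -/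
theorem stmt_9 {W : Type*} [Nonempty W] (m : ℝ) (hm : 0 < m) (hm' : m < 2)
    (P N : W → ℝ)
    (hP : ∀ w, 0 ≤ P w ∧ P w < m) (hN : ∀ w, 0 ≤ N w ∧ N w < m)
    (F : W → ℝ) (hF : ∀ w, F w = 2 * P w / (2 + P w - N w))
    (V : W → ℝ → ℝ) (hV : ∀ w v, V w v = (1 - v / 2) * P w + v / 2 * N w)
    (hFb : BddAbove (Set.range F))
    (v : ℝ) (hVb : BddAbove (Set.range fun w => V w v)) :
    (0 ≤ sSup (Set.range fun w => V w v) - v →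
      sSup (Set.range fun w => V w v) - v ≥
        (2 - m) / 2 * (sSup (Set.range F) - v)) ∧
    (sSup (Set.range fun w => V w v) - v < 0 →
      sSup (Set.range fun w => V w v) - v ≥
        (2 + m) / 2 * (sSup (Set.range F) - v)) :=
  stmt_9_general hm' (fun w => abs_sub_le_of_nonneg_of_le
    (hP w).1 (hP w).2.le (hN w).1 (hN w).2.le) hF hV hVb
end

section
/- In the F1 setting, let w ∈ W and v ∈ ℝ, and let e = V(w,v) − v. Then: (a) if e ≥ 0, F(w) ≥ v + 2e/(2 + m); (b) if e < 0, F(w) ≥ v + 2e/(2 − m). -/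
section F1Measure

variable {K : Type*} [Field K]

/-- The F1-measure at a point where the paper's functions `P` and `N` take the values `p`
and `n`. -/
def f1Measure (p n : K) : K :=
  2 * p / (2 + p - n)

/-- The valuation function `V(w, v)` of the F1-measure at a point `w` where `P` and `N` take the
values `p` and `n`. The threshold `v` comes first, as it parametrizes a function affine in
`(p, n)`. -/
def f1Valuation (v p n : K) : K :=
  (1 - v / 2) * p + v / 2 * n

theorem f1Measure_eq_add_div [NeZero (2 : K)] {p n : K} (hD : 2 + p - n ≠ 0) (v : K) :
    f1Measure p n = v + 2 * (f1Valuation v p n - v) / (2 + p - n) := by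
  unfold f1Measure f1Valuation
  field_simp
  ring

variable [LinearOrder K] [IsStrictOrderedRing K] {m p n v : K}

theorem add_div_two_add_le_f1Measure (hD : 0 < 2 + p - n) (hm : p - n ≤ m)
    (he : 0 ≤ f1Valuation v p n - v) :
    v + 2 * (f1Valuation v p n - v) / (2 + m) ≤ f1Measure p n := by
  have denom_le : 2 + p - n ≤ 2 + m := by linarith
  rw [f1Measure_eq_add_div hD.ne' v]
  gcongr

theorem add_div_two_sub_le_f1Measure (hm : m < 2) (hnp : n - p ≤ m)
    (he : f1Valuation v p n - v ≤ 0) :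
    v + 2 * (f1Valuation v p n - v) / (2 - m) ≤ f1Measure p n := by
  have le_denom : 2 - m ≤ 2 + p - n := by linarith
  have denom_pos : 0 < 2 - m := sub_pos.2 hm
  rw [f1Measure_eq_add_div (denom_pos.trans_le le_denom).ne' v]
  have inv_denom_le : (2 + p - n)⁻¹ ≤ (2 - m)⁻¹ := inv_anti₀ denom_pos le_denom
  simp only [div_eq_mul_inv]
  gcongr v + ?_
  exact mul_le_mul_of_nonpos_left inv_denom_le (mul_nonpos_of_nonneg_of_nonpos zero_le_two he)

theorem stmt_10_general (hm : m < 2) (hpn : |p - n| ≤ m) :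
    (0 ≤ f1Valuation v p n - v →
      v + 2 * (f1Valuation v p n - v) / (2 + m) ≤ f1Measure p n) ∧
    (f1Valuation v p n - v ≤ 0 →
      v + 2 * (f1Valuation v p n - v) / (2 - m) ≤ f1Measure p n) := by
  obtain ⟨hpn, hnp⟩ := abs_sub_le_iff.1 hpn
  exact ⟨add_div_two_add_le_f1Measure (by linarith) hpn, add_div_two_sub_le_f1Measure hm hnp⟩

end F1Measure

/-- In the F1 setting, with `e = V(w,v) − v`: (a) if `e ≥ 0` then
`F(w) ≥ v + 2e/(2 + m)`; (b) if `e < 0` then `F(w) ≥ v + 2e/(2 − m)`. -/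
theorem stmt_10 {W : Type*} [Nonempty W] (m : ℝ) (hm : 0 < m) (hm' : m < 2)
    (P N : W → ℝ)
    (hP : ∀ w, 0 ≤ P w ∧ P w < m) (hN : ∀ w, 0 ≤ N w ∧ N w < m)
    (F : W → ℝ) (hF : ∀ w, F w = 2 * P w / (2 + P w - N w))
    (V : W → ℝ → ℝ) (hV : ∀ w v, V w v = (1 - v / 2) * P w + v / 2 * N w)
    (w : W) (v : ℝ) :
    (0 ≤ V w v - v → F w ≥ v + 2 * (V w v - v) / (2 + m)) ∧
    (V w v - v < 0 → F w ≥ v + 2 * (V w v - v) / (2 - m)) := by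
  obtain ⟨above, below⟩ := stmt_10_general (v := v) hm' <|
    (abs_sub_lt_of_nonneg_of_lt (hP w).1 (hP w).2 (hN w).1 (hN w).2).le
  rw [hF, hV]
  exact ⟨above, fun he ↦ below he.le⟩
end

section
/- (One-step progress of Alternate-Maximization with inexact maximizations, F1-measure.) In the F1 setting, let w₀ ∈ W, let δ ∈ ℝ, set the (inexact) challenge level v = F(w₀) + δ, and suppose w₁ ∈ W satisfies V(w₁, v) = sup_{w ∈ W} V(w, v) − ε for some ε ≥ 0 (inexact maximization of the valuation). Then F* − F(w₁) ≤ (2m/(2 + m))·(F* − F(w₀)) + (2m/(2 − m))·|δ| + (2/(2 − m))·ε. -/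
/-!
With `c w = 1 + (P w - N w) / 2`, which lies in `[α, β] = [1 - m / 2, 1 + m / 2]`, one has
`V w v - v = (F w - v) * c w`. An almost maximizer `w₁` of the weighted gap `(F w - v) * c w`
almost maximizes `F` itself, because passing from one weight to another distorts the gap by a
factor in `[α / β, β / α]` only. The loss is a fraction `(β - α) / β` of the gap `F* - v` when the
level `v` lies below `F*`, and a fraction `(β - α) / α` of `v - F*` when it overshoots; overshooting
is possible only through `δ > 0`, since `F w₀ ≤ F*`.
-/

open Set

theorem f1_valuation_sub_level {K : Type*} [Field K] [NeZero (2 : K)] {p n : K} (v : K)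
    (h : 2 + p - n ≠ 0) :
    (1 - v / 2) * p + v / 2 * n - v = (2 * p / (2 + p - n) - v) * (1 + (p - n) / 2) := by
  have h₂ : (2 : K) ≠ 0 := two_ne_zero
  field_simp
  ring

theorem sub_le_of_weighted_sub_le {K : Type*} [Field K] [LinearOrder K] [IsStrictOrderedRing K]
    {α β a b x y v ε : K} (hα : 0 < α) (ha : a ∈ Icc α β) (hb : b ∈ Icc α β) (hε : 0 ≤ ε)
    (h : (x - v) * a ≤ (y - v) * b + ε) :
    x - y ≤ (β - α) / β * (x - v)⁺ + (β - α) / α * (x - v)⁻ + ε / α := by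
  obtain ⟨hαa, haβ⟩ := ha
  obtain ⟨hαb, hbβ⟩ := hb
  have hb₀ : 0 < b := hα.trans_le hαb
  have hβ₀ : 0 < β := hb₀.trans_le hbβ
  have ha₀ : 0 < a := hα.trans_le hαa
  have hratio_lower : 1 - a / b ≤ (β - α) / β := by
    rw [sub_div, div_self hβ₀.ne']
    gcongr
  have hratio_upper : a / b - 1 ≤ (β - α) / α := by
    rw [sub_div, div_self hα.ne']
    gcongr
  have hgap : (x - v) * (a / b) - ε / b ≤ y - v := by
    rw [← mul_div_assoc, ← sub_div, div_le_iff₀ hb₀]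
    linarith
  calc x - y ≤ (x - v) * (1 - a / b) + ε / b := by linarith
    _ = (1 - a / b) * (x - v)⁺ + (a / b - 1) * (x - v)⁻ + ε / b := by
        linear_combination (a / b - 1) * posPart_sub_negPart (x - v)
    _ ≤ (β - α) / β * (x - v)⁺ + (β - α) / α * (x - v)⁻ + ε / α := by
        gcongr

theorem mul_posPart_sub_add_mul_negPart_sub_le {R : Type*} [CommRing R] [LinearOrder R]
    [IsStrictOrderedRing R] {κ κ' d δ : R} (hκ : 0 ≤ κ) (hκκ' : κ ≤ κ') (hd : 0 ≤ d) :
    κ * (d - δ)⁺ + κ' * (d - δ)⁻ ≤ κ * d + κ' * |δ| := by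
  have hκ' : 0 ≤ κ' := hκ.trans hκκ'
  have hpos : (d - δ)⁺ ≤ d + δ⁻ :=
    sup_le (by linarith [neg_le_negPart δ]) (add_nonneg hd (negPart_nonneg δ))
  have hneg : (d - δ)⁻ ≤ δ⁺ :=
    sup_le (by linarith [le_posPart δ]) (posPart_nonneg δ)
  calc κ * (d - δ)⁺ + κ' * (d - δ)⁻ ≤ κ * (d + δ⁻) + κ' * δ⁺ := by gcongr
    _ = κ * d + (κ * δ⁻ + κ' * δ⁺) := by ring
    _ ≤ κ * d + (κ' * δ⁻ + κ' * δ⁺) := by gcongr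
    _ = κ * d + κ' * |δ| := by rw [← posPart_add_negPart δ]; ring

section ApproximateMaximizer

variable {W : Type*} {F c : W → ℝ} {S α β v ε : ℝ} {w₁ : W}

theorem isLUB_sub_le_of_weighted_sub_le (hS : IsLUB (range F) S) (hα : 0 < α)
    (hc : ∀ w, c w ∈ Icc α β) (hw₁ : ∀ w, (F w - v) * c w ≤ (F w₁ - v) * c w₁ + ε) :
    S - F w₁ ≤ (β - α) / β * (S - v)⁺ + (β - α) / α * (S - v)⁻ + ε / α := by
  have hε : 0 ≤ ε := by linarith [hw₁ w₁]
  have hclosed : IsClosed {x | x - F w₁ ≤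
      (β - α) / β * (x - v)⁺ + (β - α) / α * (x - v)⁻ + ε / α} := by
    apply isClosed_le <;> fun_prop
  refine closure_minimal (range_subset_iff.2 fun w => ?_) hclosed
    (hS.mem_closure ⟨_, mem_range_self w₁⟩)
  exact sub_le_of_weighted_sub_le hα (hc w) (hc w₁) hε (hw₁ w)

theorem isLUB_sub_le_of_weighted_sub_le_of_level_eq {w₀ : W} {δ : ℝ}
    (hS : IsLUB (range F) S) (hα : 0 < α) (hc : ∀ w, c w ∈ Icc α β)
    (hv : v = F w₀ + δ) (hw₁ : ∀ w, (F w - v) * c w ≤ (F w₁ - v) * c w₁ + ε) :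
    S - F w₁ ≤ (β - α) / β * (S - F w₀) + (β - α) / α * |δ| + ε / α := by
  have hαβ : α ≤ β := (hc w₁).1.trans (hc w₁).2
  have : 0 ≤ β - α := sub_nonneg.2 hαβ
  have hβ : 0 < β := hα.trans_le hαβ
  have hF₀ : 0 ≤ S - F w₀ := sub_nonneg.2 (hS.1 (mem_range_self w₀))
  have hgap : S - v = (S - F w₀) - δ := by rw [hv, sub_sub]
  calc S - F w₁ ≤ (β - α) / β * (S - v)⁺ + (β - α) / α * (S - v)⁻ + ε / α :=
        isLUB_sub_le_of_weighted_sub_le hS hα hc hw₁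
    _ ≤ (β - α) / β * (S - F w₀) + (β - α) / α * |δ| + ε / α := by
        rw [hgap]
        gcongr ?_ + _
        exact mul_posPart_sub_add_mul_negPart_sub_le (by positivity) (by gcongr) hF₀

end ApproximateMaximizer

/-- One-step progress of Alternate-Maximization with inexact maximizations for
the F1-measure: with inexact level `v = F(w₀) + δ` and inexact maximization
`V(w₁,v) = sup_w V(w,v) − ε`, the excess error contracts up to noise terms:
`F* − F(w₁) ≤ (2m/(2+m))·(F* − F(w₀)) + (2m/(2−m))·|δ| + (2/(2−m))·ε`. -/
theorem stmt_11 {W : Type*} [Nonempty W] (m : ℝ) (hm : 0 < m) (hm' : m < 2)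
    (P N : W → ℝ)
    (hP : ∀ w, 0 ≤ P w ∧ P w < m) (hN : ∀ w, 0 ≤ N w ∧ N w < m)
    (F : W → ℝ) (hF : ∀ w, F w = 2 * P w / (2 + P w - N w))
    (V : W → ℝ → ℝ) (hV : ∀ w v, V w v = (1 - v / 2) * P w + v / 2 * N w)
    (hFb : BddAbove (Set.range F))
    (w₀ w₁ : W) (δ ε : ℝ) (hε : 0 ≤ ε) (v : ℝ) (hv : v = F w₀ + δ)
    (hVb : BddAbove (Set.range fun w => V w v))
    (hmax : V w₁ v = sSup (Set.range fun w => V w v) - ε) :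
    sSup (Set.range F) - F w₁ ≤
      2 * m / (2 + m) * (sSup (Set.range F) - F w₀)
        + 2 * m / (2 - m) * |δ| + 2 / (2 - m) * ε := by
  have hweight : ∀ w, 1 + (P w - N w) / 2 ∈ Icc (1 - m / 2) (1 + m / 2) := fun w =>
    ⟨by linarith [hP w, hN w], by linarith [hP w, hN w]⟩
  have hgap : ∀ w, V w v - v = (F w - v) * (1 + (P w - N w) / 2) := fun w => by
    rw [hV, hF]
    exact f1_valuation_sub_level v (by linarith [hP w, hN w])
  have hw₁ : ∀ w, (F w - v) * (1 + (P w - N w) / 2) ≤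
      (F w₁ - v) * (1 + (P w₁ - N w₁) / 2) + ε := fun w => by
    rw [← hgap, ← hgap]
    linarith [le_csSup hVb (mem_range_self w)]
  have hstep := isLUB_sub_le_of_weighted_sub_le_of_level_eq
    (isLUB_csSup (range_nonempty F) hFb) (by linarith) hweight hv hw₁
  have hs : 2 + m ≠ 0 := by linarith
  have hd : 2 - m ≠ 0 := by linarith
  have hbelow : (1 + m / 2 - (1 - m / 2)) / (1 + m / 2) = 2 * m / (2 + m) := by field_simp; ring
  have habove : (1 + m / 2 - (1 - m / 2)) / (1 - m / 2) = 2 * m / (2 - m) := by field_simp; ring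
  have hinexact : ε / (1 - m / 2) = 2 / (2 - m) * ε := by field_simp
  rwa [hbelow, habove, hinexact] at hstep
end

section
/- (Sufficient dual region of the H-mean.) For all reals u > 0 and v > 0, the infimum of α·u + β·v over the set A = {(α, β) ∈ ℝ² : α ≥ 0, β ≥ 0, √α + √β ≥ √2} equals the harmonic mean 2·u·v/(u + v), and it is attained (at α = 2v²/(u+v)², β = 2u²/(u+v)², which moreover lies in the Euclidean ball of radius 2 around the origin). -/
/-! In the variables `a = √α`, `b = √β` the problem is to minimise `a² u + b² v` subject to
`a + b ≥ √c`. Cauchy–Schwarz bounds the objective below by `(a + b)² / (u⁻¹ + v⁻¹)`, with equality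
when `a u = b v`; together with `a + b = √c` this forces `a = √c v / (u + v)` and
`b = √c u / (u + v)`. -/

lemma mul_mul_add_sq_le {R : Type*} [CommRing R] [LinearOrder R] [IsStrictOrderedRing R]
    (u v a b : R) :
    u * v * (a + b) ^ 2 ≤ (a ^ 2 * u + b ^ 2 * v) * (u + v) := by
  linear_combination sq_nonneg (a * u - b * v)

section Field

variable {K : Type*} [Field K]

lemma mul_sq_div_mul_add_mul_sq_div_mul (c u v : K) :
    c * v ^ 2 / (u + v) ^ 2 * u + c * u ^ 2 / (u + v) ^ 2 * v = c * u * v / (u + v) := by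
  rcases eq_or_ne (u + v) 0 with h | h
  · simp [h]
  · field_simp
    ring

lemma mul_sq_div_add_mul_sq_div_le [LinearOrder K] [IsStrictOrderedRing K] {c u v : K}
    (hc : 0 ≤ c) (hu : 0 ≤ u) (hv : 0 ≤ v) :
    c * v ^ 2 / (u + v) ^ 2 + c * u ^ 2 / (u + v) ^ 2 ≤ c := by
  have sq_add_sq_le : v ^ 2 + u ^ 2 ≤ (u + v) ^ 2 :=
    add_comm v u ▸ pow_add_pow_le hv hu two_ne_zero
  rw [← add_div, ← mul_add]
  exact div_le_of_le_mul₀ (sq_nonneg _) hc (mul_le_mul_of_nonneg_left sq_add_sq_le hc)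

end Field

section Real

variable {c u v α β : ℝ}

lemma sqrt_sq_add_sq_le_add (hα : 0 ≤ α) (hβ : 0 ≤ β) : √(α ^ 2 + β ^ 2) ≤ α + β :=
  (Real.sqrt_le_left (add_nonneg hα hβ)).mpr (pow_add_pow_le hα hβ two_ne_zero)

lemma sqrt_mul_sq_div_sq (c : ℝ) {s t : ℝ} (hs : 0 ≤ s) (ht : 0 ≤ t) :
    √(c * s ^ 2 / t ^ 2) = √c * s / t := by
  rw [Real.sqrt_div' _ (sq_nonneg t), Real.sqrt_mul' _ (sq_nonneg s), Real.sqrt_sq hs,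
    Real.sqrt_sq ht]

lemma sqrt_mul_sq_div_add_sqrt_mul_sq_div (c : ℝ) (hu : 0 ≤ u) (hv : 0 ≤ v) (huv : 0 < u + v) :
    √(c * v ^ 2 / (u + v) ^ 2) + √(c * u ^ 2 / (u + v) ^ 2) = √c := by
  rw [sqrt_mul_sq_div_sq c hv huv.le, sqrt_mul_sq_div_sq c hu huv.le, ← add_div, ← mul_add,
    add_comm v u, mul_div_cancel_right₀ _ huv.ne']

lemma mul_mul_div_add_le_of_sqrt_le_sqrt_add_sqrt (hu : 0 ≤ u) (hv : 0 ≤ v) (hα : 0 ≤ α)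
    (hβ : 0 ≤ β) (h : √c ≤ √α + √β) : c * u * v / (u + v) ≤ α * u + β * v := by
  have le_sq : c ≤ (√α + √β) ^ 2 := (Real.sqrt_le_left (by positivity)).mp h
  refine div_le_of_le_mul₀ (by positivity) (by positivity) ?_
  calc c * u * v = u * v * c := by ring
    _ ≤ u * v * (√α + √β) ^ 2 := by gcongr
    _ ≤ (√α ^ 2 * u + √β ^ 2 * v) * (u + v) := mul_mul_add_sq_le u v _ _
    _ = (α * u + β * v) * (u + v) := by rw [Real.sq_sqrt hα, Real.sq_sqrt hβ]

theorem isLeast_mul_add_mul_of_sqrt_le_sqrt_add_sqrt (hc : 0 ≤ c) (hu : 0 ≤ u) (hv : 0 ≤ v)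
    (huv : 0 < u + v) :
    IsLeast {x : ℝ | ∃ α β : ℝ, 0 ≤ α ∧ 0 ≤ β ∧ √c ≤ √α + √β ∧ x = α * u + β * v}
      (c * u * v / (u + v)) := by
  constructor
  · exact ⟨c * v ^ 2 / (u + v) ^ 2, c * u ^ 2 / (u + v) ^ 2, by positivity, by positivity,
      (sqrt_mul_sq_div_add_sqrt_mul_sq_div c hu hv huv).ge,
      (mul_sq_div_mul_add_mul_sq_div_mul c u v).symm⟩
  · rintro _ ⟨α, β, hα, hβ, h, rfl⟩
    exact mul_mul_div_add_le_of_sqrt_le_sqrt_add_sqrt hu hv hα hβ h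

end Real

/-- Sufficient dual region of the H-mean: for `u, v > 0`, the infimum of
`α·u + β·v` over `{(α,β) : α ≥ 0, β ≥ 0, √α + √β ≥ √2}` equals the harmonic
mean `2uv/(u+v)`, attained at `α = 2v²/(u+v)², β = 2u²/(u+v)²`, a point lying
in the Euclidean ball of radius 2 around the origin. -/
theorem stmt_14 (u v : ℝ) (hu : 0 < u) (hv : 0 < v) :
    IsLeast {x : ℝ | ∃ α β : ℝ, 0 ≤ α ∧ 0 ≤ β ∧
        Real.sqrt α + Real.sqrt β ≥ Real.sqrt 2 ∧ x = α * u + β * v}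
      (2 * u * v / (u + v)) ∧
    (2 * v ^ 2 / (u + v) ^ 2) * u + (2 * u ^ 2 / (u + v) ^ 2) * v
      = 2 * u * v / (u + v) ∧
    Real.sqrt (2 * v ^ 2 / (u + v) ^ 2) + Real.sqrt (2 * u ^ 2 / (u + v) ^ 2)
      ≥ Real.sqrt 2 ∧
    Real.sqrt ((2 * v ^ 2 / (u + v) ^ 2) ^ 2 + (2 * u ^ 2 / (u + v) ^ 2) ^ 2)
      ≤ 2 :=
  ⟨isLeast_mul_add_mul_of_sqrt_le_sqrt_add_sqrt zero_le_two hu.le hv.le (add_pos hu hv),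
    mul_sq_div_mul_add_mul_sq_div_mul 2 u v,
    (sqrt_mul_sq_div_add_sqrt_mul_sq_div 2 hu.le hv.le (add_pos hu hv)).ge,
    (sqrt_sq_add_sq_le_add (by positivity) (by positivity)).trans
      (mul_sq_div_add_mul_sq_div_le zero_le_two hu.le hv.le)⟩
end

section
/- (Stability of the H-mean.) For all reals u > 0, v > 0 and every ε ≥ 0, 2·(u+ε)·(v+ε)/((u+ε) + (v+ε)) ≤ 2·u·v/(u+v) + 4·ε. That is, the H-mean link function Ψ(u,v) = 2uv/(u+v) is δ-stable with δ(ε) = 4ε. -/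
/-! The harmonic mean is the arithmetic mean minus `(u - v)² / (2 (u + v))`. A common shift by `ε`
raises the arithmetic mean by `ε` and leaves `u - v` unchanged, so it changes the correction only
through its denominator. For nonnegative arguments `(u - v)² ≤ (u + v)²`, which bounds that change
by another `ε`. The constant `2` is optimal: along the diagonal direction `(1, 1)` the derivative
of the harmonic mean is `2 (u² + v²) / (u + v)²`, which tends to `2` as `v → 0`. -/

/-- The harmonic mean `Ψ(u, v) = 2uv / (u + v)`, the H-mean performance measure. When `u + v = 0`
it takes the junk value `0`. -/
def hMean {K : Type*} [Field K] (u v : K) : K :=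
  2 * u * v / (u + v)

theorem hMean_add_add {K : Type*} [Field K] {u v ε : K} (huv : u + v ≠ 0)
    (hε : u + v + 2 * ε ≠ 0) :
    hMean (u + ε) (v + ε) =
      hMean u v + ε * (1 + (u - v) ^ 2 / ((u + v) * (u + v + 2 * ε))) := by
  have hshift : (u + ε) + (v + ε) = u + v + 2 * ε := by ring
  rw [hMean, hMean, hshift]
  field_simp
  ring

section LinearOrderedField

variable {K : Type*} [Field K] [LinearOrder K] [IsStrictOrderedRing K] {u v ε : K}

theorem sq_sub_div_add_mul_add_le_one (hu : 0 ≤ u) (hv : 0 ≤ v) (hε : 0 ≤ ε) :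
    (u - v) ^ 2 / ((u + v) * (u + v + 2 * ε)) ≤ 1 := by
  refine div_le_one_of_le₀ ?_ (by positivity)
  calc (u - v) ^ 2 ≤ (u - v) ^ 2 + 4 * (u * v) := le_add_of_nonneg_right (by positivity)
    _ = (u + v) * (u + v) := by ring
    _ ≤ (u + v) * (u + v + 2 * ε) :=
        mul_le_mul_of_nonneg_left (le_add_of_nonneg_right (by positivity)) (by positivity)

theorem stmt_16_general (hu : 0 ≤ u) (hv : 0 ≤ v) (huv : 0 < u + v) (hε : 0 ≤ ε) :
    hMean (u + ε) (v + ε) ≤ hMean u v + 2 * ε := by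
  have huvε : u + v + 2 * ε ≠ 0 := by positivity
  calc hMean (u + ε) (v + ε)
      = hMean u v + ε * (1 + (u - v) ^ 2 / ((u + v) * (u + v + 2 * ε))) :=
        hMean_add_add huv.ne' huvε
    _ ≤ hMean u v + ε * (1 + 1) := by gcongr; exact sq_sub_div_add_mul_add_le_one hu hv hε
    _ = hMean u v + 2 * ε := by ring

end LinearOrderedField

/-- Stability of the H-mean: `Ψ(u+ε, v+ε) ≤ Ψ(u,v) + 4ε` for
`Ψ(u,v) = 2uv/(u+v)`, `u, v > 0`, `ε ≥ 0`. -/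
theorem stmt_16 (u v ε : ℝ) (hu : 0 < u) (hv : 0 < v) (hε : 0 ≤ ε) :
    2 * (u + ε) * (v + ε) / ((u + ε) + (v + ε)) ≤ 2 * u * v / (u + v) + 4 * ε :=
  calc hMean (u + ε) (v + ε)
    _ ≤ hMean u v + 2 * ε := stmt_16_general hu.le hv.le (add_pos hu hv) hε
    _ ≤ hMean u v + 4 * ε := by gcongr; norm_num
end

section
/- (Stability of the G-mean.) For all reals u, v with 0 ≤ u ≤ 1 and 0 ≤ v ≤ 1, and every ε with 0 ≤ ε ≤ 1, √((u+ε)·(v+ε)) ≤ √(u·v) + 3·√ε. That is, on [0,1]², the G-mean link function Ψ(u,v) = √(uv) is δ-stable with δ(ε) = 3√ε. -/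
theorem sqrt_add_le_add_sqrt {x y : ℝ} (hx : 0 ≤ x) (hy : 0 ≤ y) : √(x + y) ≤ √x + √y := by
  simpa only [Real.sqrt_eq_rpow] using
    Real.rpow_add_le_add_rpow hx hy one_half_pos.le one_half_lt_one.le

theorem sqrt_add_mul_add_le {u v ε : ℝ} (hu : 0 ≤ u) (hv : 0 ≤ v) (hε : 0 ≤ ε) :
    √((u + ε) * (v + ε)) ≤ √(u * v) + √(u + v + ε) * √ε :=
  calc
    √((u + ε) * (v + ε)) = √(u * v + (u + v + ε) * ε) := by ring_nf
    _ ≤ √(u * v) + √((u + v + ε) * ε) :=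
      sqrt_add_le_add_sqrt (mul_nonneg hu hv) (by positivity)
    _ = √(u * v) + √(u + v + ε) * √ε := by rw [Real.sqrt_mul' _ hε]

theorem stmt_17_general {u v ε : ℝ} (hu : 0 ≤ u) (hv : 0 ≤ v) (hε : 0 ≤ ε)
    (h : u + v + ε ≤ 9) : √((u + ε) * (v + ε)) ≤ √(u * v) + 3 * √ε := by
  have h_sqrt : √(u + v + ε) ≤ 3 := Real.sqrt_le_iff.mpr ⟨by norm_num, by linarith⟩
  calc
    √((u + ε) * (v + ε)) ≤ √(u * v) + √(u + v + ε) * √ε := sqrt_add_mul_add_le hu hv hε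
    _ ≤ √(u * v) + 3 * √ε := by gcongr

/-- Stability of the G-mean on `[0,1]²`:
`√((u+ε)(v+ε)) ≤ √(uv) + 3√ε` for `u, v ∈ [0,1]` and `ε ∈ [0,1]`. -/
theorem stmt_17 (u v ε : ℝ) (hu : 0 ≤ u) (hu1 : u ≤ 1) (hv : 0 ≤ v)
    (hv1 : v ≤ 1) (hε : 0 ≤ ε) (hε1 : ε ≤ 1) :
    Real.sqrt ((u + ε) * (v + ε)) ≤ Real.sqrt (u * v) + 3 * Real.sqrt ε :=
  stmt_17_general hu hv hε (by linarith)
end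

section
/- (Alt-Max contraction rate for the Jaccard coefficient.) Let W be a nonempty set, let θ > 0 be a real, let 0 < m < (1 + θ)/θ, and let P, N : W → ℝ satisfy 0 ≤ P(w) ≤ m and 0 ≤ N(w) ≤ m for all w. Define the Jaccard measure J(w) = P(w) / (1 + θ − θ·N(w)) (whose denominator is positive under these conditions) and the valuation V(w,v) = (1/(1+θ))·P(w) + (v·θ/(1+θ))·N(w). Assume J is bounded above with J* = sup_{w∈W} J(w). If w₀, w₁ ∈ W satisfy v = J(w₀) and V(w₁, v) = sup_{w ∈ W} V(w, v), then J* − J(w₁) ≤ [m·θ/(1 + θ)] · (J* − J(w₀)). -/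
/-!
Write `J = P / D` with `D = 1 + θ - θ N`. Up to a positive affine change, maximizing `V(·, v)` is
maximizing `P - v D = D (J - v)`, so alternate maximization is Dinkelbach's method for the ratio
`P / D`. If `0 < a ≤ D ≤ b` and `w₁` maximizes `D (J - v)` at the level `v = J(w₀)`, then
`J(w₁) ≥ v` and `a (J(w) - v) ≤ b (J(w₁) - v)` for every `w`, which is a contraction of the gap to
`J(w)` by `1 - a / b`. Here `a = 1 + θ - m θ` and `b = 1 + θ`.
-/

section LinearOrderedField

variable {K : Type*} [Field K]

lemma sub_mul_eq_mul_div_sub {y : K} (hy : y ≠ 0) (x c : K) : x - c * y = y * (x / y - c) := by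
  rw [mul_sub, mul_div_cancel₀ x hy, mul_comm c]

lemma one_add_mul_valuation_sub {θ : K} (hθ : 1 + θ ≠ 0) (p n v : K) :
    (1 + θ) * (1 / (1 + θ) * p + v * θ / (1 + θ) * n - v) = p - v * (1 + θ - θ * n) := by
  field_simp
  ring

variable [LinearOrder K] [IsStrictOrderedRing K]

lemma sub_le_mul_sub_iff_le_div {η : K} (hη : η < 1) {x c d : K} :
    x - c ≤ η * (x - d) ↔ x ≤ (c - η * d) / (1 - η) := by
  rw [le_div_iff₀ (sub_pos.2 hη)]
  constructor <;> intro h <;> linarith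

lemma div_le_div_of_sub_div_mul_le {x₀ y₀ x₁ y₁ : K} (hy₀ : y₀ ≠ 0) (hy₁ : 0 < y₁)
    (h : x₀ - x₀ / y₀ * y₀ ≤ x₁ - x₀ / y₀ * y₁) : x₀ / y₀ ≤ x₁ / y₁ := by
  rw [div_mul_cancel₀ _ hy₀, sub_self, sub_nonneg] at h
  exact (le_div_iff₀ hy₁).2 h

variable {W : Type*} {f g : W → K} {a b : K} {w₀ w₁ : W}

lemma mul_div_sub_le_mul_div_sub (ha : 0 < a) (hag : ∀ w, a ≤ g w) (hgb : g w₁ ≤ b)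
    (hmax : ∀ w, f w - f w₀ / g w₀ * g w ≤ f w₁ - f w₀ / g w₀ * g w₁) (w : W) :
    a * (f w / g w - f w₀ / g w₀) ≤ b * (f w₁ / g w₁ - f w₀ / g w₀) := by
  have hg : ∀ w, 0 < g w := fun w => ha.trans_le (hag w)
  have hb : 0 ≤ b := (hg w₁).le.trans hgb
  have hincr : 0 ≤ f w₁ / g w₁ - f w₀ / g w₀ :=
    sub_nonneg.2 (div_le_div_of_sub_div_mul_le (hg w₀).ne' (hg w₁) (hmax w₀))
  rcases le_total 0 (f w / g w - f w₀ / g w₀) with hpos | hneg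
  · calc a * (f w / g w - f w₀ / g w₀)
        ≤ g w * (f w / g w - f w₀ / g w₀) := mul_le_mul_of_nonneg_right (hag w) hpos
      _ = f w - f w₀ / g w₀ * g w := (sub_mul_eq_mul_div_sub (hg w).ne' _ _).symm
      _ ≤ f w₁ - f w₀ / g w₀ * g w₁ := hmax w
      _ = g w₁ * (f w₁ / g w₁ - f w₀ / g w₀) := sub_mul_eq_mul_div_sub (hg w₁).ne' _ _
      _ ≤ b * (f w₁ / g w₁ - f w₀ / g w₀) := mul_le_mul_of_nonneg_right hgb hincr
  · exact (mul_nonpos_of_nonneg_of_nonpos ha.le hneg).trans (mul_nonneg hb hincr)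

theorem div_sub_div_le_one_sub_mul (ha : 0 < a) (hag : ∀ w, a ≤ g w) (hgb : g w₁ ≤ b)
    (hmax : ∀ w, f w - f w₀ / g w₀ * g w ≤ f w₁ - f w₀ / g w₀ * g w₁) (w : W) :
    f w / g w - f w₁ / g w₁ ≤ (1 - a / b) * (f w / g w - f w₀ / g w₀) := by
  have hb : 0 < b := ha.trans_le ((hag w₁).trans hgb)
  have hprogress : a / b * (f w / g w - f w₀ / g w₀) ≤ f w₁ / g w₁ - f w₀ / g w₀ := by
    rw [div_mul_eq_mul_div, div_le_iff₀' hb]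
    exact mul_div_sub_le_mul_div_sub ha hag hgb hmax w
  linarith

end LinearOrderedField

theorem stmt_19_general {W : Type*} (θ m : ℝ) (hθ : 0 < θ) (hm' : m < (1 + θ) / θ)
    (P N : W → ℝ) (hN : ∀ w, 0 ≤ N w ∧ N w ≤ m)
    (J : W → ℝ) (hJ : ∀ w, J w = P w / (1 + θ - θ * N w))
    (V : W → ℝ → ℝ)
    (hV : ∀ w v, V w v = 1 / (1 + θ) * P w + v * θ / (1 + θ) * N w)
    (w₀ w₁ : W) (hmax : ∀ w, V w (J w₀) ≤ V w₁ (J w₀)) :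
    BddAbove (Set.range J) ∧
      sSup (Set.range J) - J w₁ ≤ m * θ / (1 + θ) * (sSup (Set.range J) - J w₀) := by
  have hb : 0 < 1 + θ := by linarith
  have ha : 0 < 1 + θ - m * θ := sub_pos.2 ((lt_div_iff₀ hθ).1 hm')
  have hη : m * θ / (1 + θ) < 1 := (div_lt_one hb).2 (sub_pos.1 ha)
  have hrate : 1 - (1 + θ - m * θ) / (1 + θ) = m * θ / (1 + θ) := by
    rw [one_sub_div hb.ne', sub_sub_cancel]
  have haD (w : W) : 1 + θ - m * θ ≤ 1 + θ - θ * N w := by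
    rw [mul_comm m]
    exact sub_le_sub_left (mul_le_mul_of_nonneg_left (hN w).2 hθ.le) _
  have hDb : 1 + θ - θ * N w₁ ≤ 1 + θ := sub_le_self _ (mul_nonneg hθ.le (hN w₁).1)
  have hmaxD (w : W) :
      P w - J w₀ * (1 + θ - θ * N w) ≤ P w₁ - J w₀ * (1 + θ - θ * N w₁) := by
    rw [← one_add_mul_valuation_sub hb.ne', ← one_add_mul_valuation_sub hb.ne', ← hV, ← hV]
    exact mul_le_mul_of_nonneg_left (sub_le_sub_right (hmax w) _) hb.le
  have hgap (w : W) : J w - J w₁ ≤ m * θ / (1 + θ) * (J w - J w₀) := by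
    simp only [hJ] at hmaxD ⊢
    rw [← hrate]
    exact div_sub_div_le_one_sub_mul ha haD hDb hmaxD w
  have hbound : ∀ x ∈ Set.range J,
      x ≤ (J w₁ - m * θ / (1 + θ) * J w₀) / (1 - m * θ / (1 + θ)) :=
    Set.forall_mem_range.2 fun w => (sub_le_mul_sub_iff_le_div hη).1 (hgap w)
  exact ⟨⟨_, hbound⟩, (sub_le_mul_sub_iff_le_div hη).2 (csSup_le ⟨_, w₀, rfl⟩ hbound)⟩

/-- Alt-Max contraction rate for the Jaccard coefficient: one exact
alternate-maximization step contracts the excess error by `mθ/(1+θ)`. -/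
theorem stmt_19 {W : Type*} [Nonempty W] (θ m : ℝ)
    (hθ : 0 < θ) (hm : 0 < m) (hm' : m < (1 + θ) / θ)
    (P N : W → ℝ)
    (hP : ∀ w, 0 ≤ P w ∧ P w ≤ m) (hN : ∀ w, 0 ≤ N w ∧ N w ≤ m)
    (J : W → ℝ) (hJ : ∀ w, J w = P w / (1 + θ - θ * N w))
    (V : W → ℝ → ℝ)
    (hV : ∀ w v, V w v = 1 / (1 + θ) * P w + v * θ / (1 + θ) * N w)
    (hJb : BddAbove (Set.range J))
    (w₀ w₁ : W) (v : ℝ) (hv : v = J w₀)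
    (hVb : BddAbove (Set.range fun w => V w v))
    (hmax : V w₁ v = sSup (Set.range fun w => V w v)) :
    sSup (Set.range J) - J w₁ ≤ m * θ / (1 + θ) * (sSup (Set.range J) - J w₀) := by
  subst hv
  exact (stmt_19_general θ m hθ hm' P N hN J hJ V hV w₀ w₁
    fun w => hmax ▸ le_csSup hVb ⟨w, rfl⟩).2
end
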